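/- arXiv:2006.06849 — 9 statements merged into one kernel-verified Lean document; each statement's English description precedes it below -/
import Mathlib

section
/- For all α₁, α₂, α₃, α₄ ∈ (0, π) with tan(α₃/2)·tan(α₄/2) ≠ 1, writing tᵢ = tan(αᵢ/2), the equation (t₂ − t₁)/(t₂ + t₁) = (1 + t₃t₄)/(1 − t₃t₄) has no solution, and the equation (t₂ − t₁)/(t₂ + t₁) = −(1 + t₃t₄)/(1 − t₃t₄) has no solution. -/
open Real

theorem stmt1 (α₁ α₂ α₃ α₄ : ℝ)
    (h₁ : α₁ ∈ Set.Ioo 0 π) (h₂ : α₂ ∈ Set.Ioo 0 π)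
    (h₃ : α₃ ∈ Set.Ioo 0 π) (h₄ : α₄ ∈ Set.Ioo 0 π)
    (hne : Real.tan (α₃ / 2) * Real.tan (α₄ / 2) ≠ 1) :
    (Real.tan (α₂ / 2) - Real.tan (α₁ / 2)) / (Real.tan (α₂ / 2) + Real.tan (α₁ / 2)) ≠
      (1 + Real.tan (α₃ / 2) * Real.tan (α₄ / 2)) / (1 - Real.tan (α₃ / 2) * Real.tan (α₄ / 2)) ∧
    (Real.tan (α₂ / 2) - Real.tan (α₁ / 2)) / (Real.tan (α₂ / 2) + Real.tan (α₁ / 2)) ≠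
      -((1 + Real.tan (α₃ / 2) * Real.tan (α₄ / 2)) / (1 - Real.tan (α₃ / 2) * Real.tan (α₄ / 2))) := by
  have key : ∀ α ∈ Set.Ioo 0 π, 0 < Real.tan (α / 2) := fun α h =>
    Real.tan_pos_of_pos_of_lt_pi_div_two (by linarith [h.1]) (by linarith [h.2])
  have a := key _ h₁
  have b := key _ h₂
  have p := mul_pos (key _ h₃) (key _ h₄)
  generalize Real.tan (α₃ / 2) * Real.tan (α₄ / 2) = q at *
  generalize Real.tan (α₁ / 2) = x at *
  generalize Real.tan (α₂ / 2) = y at *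
  have hq : 1 - q ≠ 0 := fun h => hne (by linarith)
  have hxy : y + x ≠ 0 := by positivity
  have h1 := mul_pos p a
  have h2 := mul_pos p b
  constructor
  · intro h
    rw [div_eq_div_iff hxy hq] at h
    linarith
  · intro h
    rw [← neg_div, div_eq_div_iff hxy hq] at h
    linarith
end

section
/- For all α₁, α₂, α₃, α₄ ∈ (0, π) with α₃ + α₄ ≠ π: |sin((α₂ − α₁)/2)/sin((α₂ + α₁)/2)| < 1 and |cos((α₄ − α₃)/2)/cos((α₄ + α₃)/2)| > 1. Consequently sin((α₂ − α₁)/2)/sin((α₂ + α₁)/2) ≠ ± cos((α₄ − α₃)/2)/cos((α₄ + α₃)/2). -/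
open Real

theorem stmt6 (α₁ α₂ α₃ α₄ : ℝ)
    (h₁ : α₁ ∈ Set.Ioo 0 π) (h₂ : α₂ ∈ Set.Ioo 0 π)
    (h₃ : α₃ ∈ Set.Ioo 0 π) (h₄ : α₄ ∈ Set.Ioo 0 π)
    (hne : α₃ + α₄ ≠ π) :
    |Real.sin ((α₂ - α₁) / 2) / Real.sin ((α₂ + α₁) / 2)| < 1 ∧
    |Real.cos ((α₄ - α₃) / 2) / Real.cos ((α₄ + α₃) / 2)| > 1 ∧
    Real.sin ((α₂ - α₁) / 2) / Real.sin ((α₂ + α₁) / 2) ≠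
      Real.cos ((α₄ - α₃) / 2) / Real.cos ((α₄ + α₃) / 2) ∧
    Real.sin ((α₂ - α₁) / 2) / Real.sin ((α₂ + α₁) / 2) ≠
      -(Real.cos ((α₄ - α₃) / 2) / Real.cos ((α₄ + α₃) / 2)) := by
  obtain ⟨a1, b1⟩ := h₁
  obtain ⟨a2, b2⟩ := h₂
  obtain ⟨a3, b3⟩ := h₃
  obtain ⟨a4, b4⟩ := h₄
  have hs : ∀ x : ℝ, 0 < x → x < π → 0 < Real.sin (x / 2) := fun x h h' =>
    Real.sin_pos_of_pos_of_lt_pi (by linarith) (by linarith)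
  have hc : ∀ x : ℝ, 0 < x → x < π → 0 < Real.cos (x / 2) := fun x h h' =>
    Real.cos_pos_of_mem_Ioo ⟨by linarith, by linarith⟩
  have hcne : Real.cos ((α₄ + α₃) / 2) ≠ 0 := by
    intro h
    apply hne
    have h' := Real.injOn_cos (x₁ := (α₄ + α₃) / 2) (x₂ := π / 2)
      ⟨by linarith, by linarith⟩ ⟨by linarith, by linarith⟩ (by rw [h, Real.cos_pi_div_two])
    linarith
  have A : |Real.sin ((α₂ - α₁) / 2) / Real.sin ((α₂ + α₁) / 2)| < 1 := by
    have hpos : 0 < Real.sin ((α₂ + α₁) / 2) :=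
      Real.sin_pos_of_pos_of_lt_pi (by linarith) (by linarith)
    rw [abs_div, abs_of_pos hpos, div_lt_one hpos, abs_lt, sub_div, add_div,
      Real.sin_sub, Real.sin_add]
    have p := mul_pos (hs α₂ a2 b2) (hc α₁ a1 b1)
    have q := mul_pos (hc α₂ a2 b2) (hs α₁ a1 b1)
    constructor <;> linarith
  have B : |Real.cos ((α₄ - α₃) / 2) / Real.cos ((α₄ + α₃) / 2)| > 1 := by
    have p := mul_pos (hc α₄ a4 b4) (hc α₃ a3 b3)
    have q := mul_pos (hs α₄ a4 b4) (hs α₃ a3 b3)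
    rw [gt_iff_lt, abs_div, one_lt_div (abs_pos.mpr hcne)]
    refine lt_of_lt_of_le ?_ (le_abs_self _)
    rw [abs_lt, sub_div, add_div, Real.cos_sub, Real.cos_add]
    constructor <;> linarith
  refine ⟨A, B, fun h => ?_, fun h => ?_⟩
  · rw [h] at A
    exact lt_asymm A B
  · rw [h, abs_neg] at A
    exact lt_asymm A B
end

section
/- For all α₁, α₂, α₃, α₄ ∈ (0, π), writing tᵢ = tan(αᵢ/2): the equation sin((α₂ − α₁)/2)/sin((α₂ + α₁)/2) = ± sin((α₄ − α₃)/2)/sin((α₄ + α₃)/2) (i.e., equality holds with one of the two signs) is satisfied if and only if t₁/t₂ = t₃/t₄ or t₁/t₂ = t₄/t₃. -/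
open Real

lemma tan_half_pos_aux {a : ℝ} (h : a ∈ Set.Ioo 0 π) : 0 < Real.tan (a / 2) :=
  Real.tan_pos_of_pos_of_lt_pi_div_two (by linarith [h.1]) (by linarith [h.2])

lemma ratio_aux {a b : ℝ} (ha : a ∈ Set.Ioo 0 π) (hb : b ∈ Set.Ioo 0 π) :
    Real.sin ((b - a) / 2) / Real.sin ((b + a) / 2) =
      (Real.tan (b / 2) - Real.tan (a / 2)) / (Real.tan (b / 2) + Real.tan (a / 2)) := by
  have ca : 0 < Real.cos (a / 2) :=
    Real.cos_pos_of_mem_Ioo ⟨by linarith [ha.1, Real.pi_pos], by linarith [ha.2]⟩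
  have cb : 0 < Real.cos (b / 2) :=
    Real.cos_pos_of_mem_Ioo ⟨by linarith [hb.1, Real.pi_pos], by linarith [hb.2]⟩
  have e1 : Real.sin ((b - a) / 2) =
      (Real.cos (a / 2) * Real.cos (b / 2)) * (Real.tan (b / 2) - Real.tan (a / 2)) := by
    rw [sub_div, Real.sin_sub, Real.tan_eq_sin_div_cos, Real.tan_eq_sin_div_cos]
    field_simp
  have e2 : Real.sin ((b + a) / 2) =
      (Real.cos (a / 2) * Real.cos (b / 2)) * (Real.tan (b / 2) + Real.tan (a / 2)) := by
    rw [add_div, Real.sin_add, Real.tan_eq_sin_div_cos, Real.tan_eq_sin_div_cos]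
    field_simp
  rw [e1, e2, mul_div_mul_left _ _ (mul_pos ca cb).ne']

theorem stmt7 (α₁ α₂ α₃ α₄ : ℝ)
    (h₁ : α₁ ∈ Set.Ioo 0 π) (h₂ : α₂ ∈ Set.Ioo 0 π)
    (h₃ : α₃ ∈ Set.Ioo 0 π) (h₄ : α₄ ∈ Set.Ioo 0 π) :
    (Real.sin ((α₂ - α₁) / 2) / Real.sin ((α₂ + α₁) / 2) =
        Real.sin ((α₄ - α₃) / 2) / Real.sin ((α₄ + α₃) / 2) ∨
     Real.sin ((α₂ - α₁) / 2) / Real.sin ((α₂ + α₁) / 2) =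
        -(Real.sin ((α₄ - α₃) / 2) / Real.sin ((α₄ + α₃) / 2))) ↔
    (Real.tan (α₁ / 2) / Real.tan (α₂ / 2) = Real.tan (α₃ / 2) / Real.tan (α₄ / 2) ∨
     Real.tan (α₁ / 2) / Real.tan (α₂ / 2) = Real.tan (α₄ / 2) / Real.tan (α₃ / 2)) := by
  rw [ratio_aux h₁ h₂, ratio_aux h₃ h₄]
  have p₁ := tan_half_pos_aux h₁
  have p₂ := tan_half_pos_aux h₂
  have p₃ := tan_half_pos_aux h₃
  have p₄ := tan_half_pos_aux h₄
  generalize Real.tan (α₁ / 2) = a at *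
  generalize Real.tan (α₂ / 2) = b at *
  generalize Real.tan (α₃ / 2) = c at *
  generalize Real.tan (α₄ / 2) = d at *
  have q : b + a ≠ 0 := by positivity
  have r : d + c ≠ 0 := by positivity
  rw [← neg_div, div_eq_div_iff q r, div_eq_div_iff q r, div_eq_div_iff p₂.ne' p₄.ne',
    div_eq_div_iff p₂.ne' p₃.ne']
  refine or_congr ⟨fun h => ?_, fun h => ?_⟩ ⟨fun h => ?_, fun h => ?_⟩ <;> linarith
end

section
/- For all α₁, α₂, α₃, α₄ ∈ (0, π), the set { ρ₁ ∈ [0, π] : −1 ≤ (cos α₃ cos α₄ − cos ξ(ρ₁))/(sin α₃ sin α₄) ≤ 1 }, where ξ(ρ₁) = arccos(cos α₁ cos α₂ − sin α₁ sin α₂ cos ρ₁), is order-connected (an interval); it is moreover closed. -/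
open Real

theorem stmt11 (α₁ α₂ α₃ α₄ : ℝ)
    (h₁ : α₁ ∈ Set.Ioo 0 π) (h₂ : α₂ ∈ Set.Ioo 0 π)
    (h₃ : α₃ ∈ Set.Ioo 0 π) (h₄ : α₄ ∈ Set.Ioo 0 π) :
    let ξ : ℝ → ℝ := fun ρ₁ =>
      Real.arccos (Real.cos α₁ * Real.cos α₂ - Real.sin α₁ * Real.sin α₂ * Real.cos ρ₁)
    let S : Set ℝ := {ρ₁ | ρ₁ ∈ Set.Icc 0 π ∧
      -1 ≤ (Real.cos α₃ * Real.cos α₄ - Real.cos (ξ ρ₁)) / (Real.sin α₃ * Real.sin α₄) ∧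
      (Real.cos α₃ * Real.cos α₄ - Real.cos (ξ ρ₁)) / (Real.sin α₃ * Real.sin α₄) ≤ 1}
    S.OrdConnected ∧ IsClosed S := by
  intro ξ S
  have s1 := Real.sin_pos_of_mem_Ioo h₁
  have s2 := Real.sin_pos_of_mem_Ioo h₂
  have s34 := mul_pos (Real.sin_pos_of_mem_Ioo h₃) (Real.sin_pos_of_mem_Ioo h₄)
  have hanti : ∀ x y : ℝ, 0 ≤ x → x ≤ y → y ≤ π →
      (Real.cos α₃ * Real.cos α₄ - Real.cos (ξ y)) / (Real.sin α₃ * Real.sin α₄) ≤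
      (Real.cos α₃ * Real.cos α₄ - Real.cos (ξ x)) / (Real.sin α₃ * Real.sin α₄) := by
    intro x y hx hxy hy
    have hc : Real.cos y ≤ Real.cos x := Real.cos_le_cos_of_nonneg_of_le_pi hx hy hxy
    have hm := mul_le_mul_of_nonneg_left hc (mul_pos s1 s2).le
    have hξ : ξ y ≤ ξ x := Real.antitone_arccos (by linarith)
    have hcc : Real.cos (ξ x) ≤ Real.cos (ξ y) :=
      Real.cos_le_cos_of_nonneg_of_le_pi (Real.arccos_nonneg _) (Real.arccos_le_pi _) hξ
    exact div_le_div_of_nonneg_right (by linarith) s34.le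
  have hξc : Continuous ξ := Real.continuous_arccos.comp (by fun_prop)
  have hf : Continuous fun x =>
      (Real.cos α₃ * Real.cos α₄ - Real.cos (ξ x)) / (Real.sin α₃ * Real.sin α₄) :=
    (continuous_const.sub (Real.continuous_cos.comp hξc)).div_const _
  refine ⟨⟨?_⟩, ?_⟩
  · rintro a ⟨ha, -, ha2⟩ b ⟨hb, hb1, -⟩ x ⟨hax, hxb⟩
    exact ⟨⟨ha.1.trans hax, hxb.trans hb.2⟩,
      hb1.trans (hanti x b (ha.1.trans hax) hxb hb.2),
      (hanti a x ha.1 hax (hxb.trans hb.2)).trans ha2⟩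
  · exact isClosed_Icc.inter
      ((isClosed_le continuous_const hf).inter (isClosed_le hf continuous_const))
end

section
/- For all α₁, α₂, α₃, α₄ ∈ (0, π), the function ρ₁ ↦ arccos((cos α₃ cos α₄ − cos ξ(ρ₁))/(sin α₃ sin α₄)), where ξ(ρ₁) = arccos(cos α₁ cos α₂ − sin α₁ sin α₂ cos ρ₁), is strictly increasing on any subinterval of [0, π] on which its arccos argument lies in [−1, 1]. -/
open Real

theorem stmt12 (α₁ α₂ α₃ α₄ : ℝ)
    (h₁ : α₁ ∈ Set.Ioo 0 π) (h₂ : α₂ ∈ Set.Ioo 0 π)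
    (h₃ : α₃ ∈ Set.Ioo 0 π) (h₄ : α₄ ∈ Set.Ioo 0 π) :
    ∀ a b : ℝ, Set.Icc a b ⊆ Set.Icc 0 π →
      (∀ ρ₁ ∈ Set.Icc a b,
        (Real.cos α₃ * Real.cos α₄ -
            Real.cos (Real.arccos
              (Real.cos α₁ * Real.cos α₂ - Real.sin α₁ * Real.sin α₂ * Real.cos ρ₁))) /
          (Real.sin α₃ * Real.sin α₄) ∈ Set.Icc (-1 : ℝ) 1) →
      StrictMonoOn
        (fun ρ₁ : ℝ =>
          Real.arccos ((Real.cos α₃ * Real.cos α₄ -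
              Real.cos (Real.arccos
                (Real.cos α₁ * Real.cos α₂ - Real.sin α₁ * Real.sin α₂ * Real.cos ρ₁))) /
            (Real.sin α₃ * Real.sin α₄)))
        (Set.Icc a b) := by
  intro a b hab harg x hx y hy hxy
  have s1 := Real.sin_pos_of_mem_Ioo h₁
  have s2 := Real.sin_pos_of_mem_Ioo h₂
  have s3 := Real.sin_pos_of_mem_Ioo h₃
  have s4 := Real.sin_pos_of_mem_Ioo h₄
  have s12 := mul_pos s1 s2
  have s34 := mul_pos s3 s4
  have key : ∀ ρ : ℝ, Real.cos (Real.arccos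
      (Real.cos α₁ * Real.cos α₂ - Real.sin α₁ * Real.sin α₂ * Real.cos ρ)) =
      Real.cos α₁ * Real.cos α₂ - Real.sin α₁ * Real.sin α₂ * Real.cos ρ := by
    intro ρ
    have hp := Real.neg_one_le_cos (α₁ + α₂)
    have hm := Real.cos_le_one (α₁ - α₂)
    rw [Real.cos_add] at hp
    rw [Real.cos_sub] at hm
    have c1 := mul_le_mul_of_nonneg_left (Real.cos_le_one ρ) s12.le
    have c2 := mul_le_mul_of_nonneg_left (Real.neg_one_le_cos ρ) s12.le
    apply Real.cos_arccos <;> linarith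
  have hcos : Real.cos y < Real.cos x :=
    Real.strictAntiOn_cos (hab hx) (hab hy) hxy
  refine Real.strictAntiOn_arccos (harg y hy) (harg x hx) ?_
  rw [key, key]
  apply div_lt_div_of_pos_right _ s34
  have := mul_lt_mul_of_pos_left hcos s12
  linarith
end

section
/- Let α₁, α₂, α₃, α₄ ∈ (0, π) with α₁ + α₂ + α₃ + α₄ = 2π, and let ρ₁ ∈ (0, π]. Set ξ = arccos(cos α₁ cos α₂ − sin α₁ sin α₂ cos ρ₁). Then (cos α₃ cos α₄ − cos ξ)/(sin α₃ sin α₄) < 1; consequently arccos((cos α₃ cos α₄ − cos ξ)/(sin α₃ sin α₄)) > 0, so the branch-1 value ρ₃ = arccos(...) and the branch-2 value ρ₃ = −arccos(...) of the folding angle ρ₃ differ for every ρ₁ ∈ (0, π]. -/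
open Real

theorem stmt13 (α₁ α₂ α₃ α₄ ρ₁ : ℝ)
    (h₁ : α₁ ∈ Set.Ioo 0 π) (h₂ : α₂ ∈ Set.Ioo 0 π)
    (h₃ : α₃ ∈ Set.Ioo 0 π) (h₄ : α₄ ∈ Set.Ioo 0 π)
    (hdev : α₁ + α₂ + α₃ + α₄ = 2 * π)
    (hρ : ρ₁ ∈ Set.Ioc 0 π) :
    let ξ := Real.arccos (Real.cos α₁ * Real.cos α₂ - Real.sin α₁ * Real.sin α₂ * Real.cos ρ₁)
    (Real.cos α₃ * Real.cos α₄ - Real.cos ξ) / (Real.sin α₃ * Real.sin α₄) < 1 ∧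
    0 < Real.arccos ((Real.cos α₃ * Real.cos α₄ - Real.cos ξ) / (Real.sin α₃ * Real.sin α₄)) ∧
    Real.arccos ((Real.cos α₃ * Real.cos α₄ - Real.cos ξ) / (Real.sin α₃ * Real.sin α₄)) ≠
      -Real.arccos ((Real.cos α₃ * Real.cos α₄ - Real.cos ξ) / (Real.sin α₃ * Real.sin α₄)) := by
  intro ξ
  have s₁ := Real.sin_pos_of_mem_Ioo h₁
  have s₂ := Real.sin_pos_of_mem_Ioo h₂
  have s₃ := Real.sin_pos_of_mem_Ioo h₃
  have s₄ := Real.sin_pos_of_mem_Ioo h₄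
  have p := mul_pos s₁ s₂
  have q := mul_pos s₃ s₄
  have hc : Real.cos ρ₁ < 1 := by
    have := Real.cos_lt_cos_of_nonneg_of_le_pi le_rfl hρ.2 hρ.1
    rwa [Real.cos_zero] at this
  have hc' := Real.neg_one_le_cos ρ₁
  have hadd := Real.cos_add α₁ α₂
  have hsub := Real.cos_sub α₁ α₂
  have hadd' := Real.cos_add α₃ α₄
  have b1 := Real.neg_one_le_cos (α₁ + α₂)
  have b2 := Real.cos_le_one (α₁ - α₂)
  have heq : Real.cos (α₃ + α₄) = Real.cos (α₁ + α₂) := by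
    rw [show α₃ + α₄ = 2 * π - (α₁ + α₂) by linarith, Real.cos_two_pi_sub]
  have m1 : Real.sin α₁ * Real.sin α₂ * Real.cos ρ₁ < Real.sin α₁ * Real.sin α₂ := by
    nlinarith
  have m2 : -(Real.sin α₁ * Real.sin α₂) ≤ Real.sin α₁ * Real.sin α₂ * Real.cos ρ₁ := by
    nlinarith
  have hξ : Real.cos ξ =
      Real.cos α₁ * Real.cos α₂ - Real.sin α₁ * Real.sin α₂ * Real.cos ρ₁ :=
    Real.cos_arccos (by linarith) (by linarith)
  have key : (Real.cos α₃ * Real.cos α₄ - Real.cos ξ) / (Real.sin α₃ * Real.sin α₄) < 1 := by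
    rw [div_lt_one q, hξ]
    linarith
  have hpos := Real.arccos_pos.2 key
  exact ⟨key, hpos, fun h => by linarith⟩
end

section
/- Let α₁, α₂ ∈ (0, π), set α₃ = π − α₁ and α₄ = π − α₂ (the flat-foldable case), let ρ₁ ∈ (0, π), and set ξ = arccos(cos α₁ cos α₂ − sin α₁ sin α₂ cos ρ₁). Then the arccos arguments u = (cos α₂ cos ξ − cos α₁)/(sin α₂ sin ξ) and v = (cos α₁ cos ξ − cos α₂)/(sin α₁ sin ξ) lie in [−1, 1], and setting ρ₂ = arccos(u) − arccos(v) (the branch-1 formula of equation (2)), one has: tan(ρ₂/2) = (sin((α₂ − α₁)/2)/sin((α₂ + α₁)/2)) · tan(ρ₁/2); moreover the branch-1 formulas give ρ₃ = arccos((cos α₃ cos α₄ − cos ξ)/(sin α₃ sin α₄)) = ρ₁ and ρ₄ = arccos(v) − arccos(u) = −ρ₂. -/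
open Real

lemma tan_half_sub_aux (A B : ℝ) (h : 0 < sin A + sin B) :
    tan ((A - B) / 2) = (cos B - cos A) / (sin A + sin B) := by
  have e1 : cos B - cos A = 2 * sin ((A + B) / 2) * sin ((A - B) / 2) := by
    have := Real.cos_sub_cos B A
    rw [this, show (B - A) / 2 = -((A - B) / 2) by ring, Real.sin_neg, add_comm B A]; ring
  have e2 : sin A + sin B = 2 * sin ((A + B) / 2) * cos ((A - B) / 2) := by
    have hA : A = (A + B) / 2 + (A - B) / 2 := by ring
    have hB : B = (A + B) / 2 - (A - B) / 2 := by ring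
    have a := Real.sin_add ((A + B) / 2) ((A - B) / 2)
    have b := Real.sin_sub ((A + B) / 2) ((A - B) / 2)
    rw [← hA] at a
    rw [← hB] at b
    rw [a, b]; ring
  rw [e2] at h
  have hs : 2 * sin ((A + B) / 2) ≠ 0 := fun h0 => by rw [h0] at h; simp at h
  rw [e1, e2, Real.tan_eq_sin_div_cos, mul_div_mul_left _ _ hs]

lemma tan_half_aux (x : ℝ) (h : 0 < sin x) : tan (x / 2) = (1 - cos x) / sin x := by
  have := tan_half_sub_aux x 0 (by simpa using h)
  simpa using this

theorem stmt14 (α₁ α₂ ρ₁ : ℝ)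
    (h₁ : α₁ ∈ Set.Ioo 0 π) (h₂ : α₂ ∈ Set.Ioo 0 π) (hρ : ρ₁ ∈ Set.Ioo 0 π) :
    let α₃ := π - α₁
    let α₄ := π - α₂
    let ξ := Real.arccos (Real.cos α₁ * Real.cos α₂ - Real.sin α₁ * Real.sin α₂ * Real.cos ρ₁)
    let u := (Real.cos α₂ * Real.cos ξ - Real.cos α₁) / (Real.sin α₂ * Real.sin ξ)
    let v := (Real.cos α₁ * Real.cos ξ - Real.cos α₂) / (Real.sin α₁ * Real.sin ξ)
    let ρ₂ := Real.arccos u - Real.arccos v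
    u ∈ Set.Icc (-1 : ℝ) 1 ∧ v ∈ Set.Icc (-1 : ℝ) 1 ∧
    Real.tan (ρ₂ / 2) =
      (Real.sin ((α₂ - α₁) / 2) / Real.sin ((α₂ + α₁) / 2)) * Real.tan (ρ₁ / 2) ∧
    Real.arccos ((Real.cos α₃ * Real.cos α₄ - Real.cos ξ) / (Real.sin α₃ * Real.sin α₄)) = ρ₁ ∧
    Real.arccos v - Real.arccos u = -ρ₂ := by
  intro α₃ α₄ ξ u v ρ₂
  have s1 := Real.sin_pos_of_mem_Ioo h₁
  have s2 := Real.sin_pos_of_mem_Ioo h₂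
  have sR := Real.sin_pos_of_mem_Ioo hρ
  have q1 := Real.sin_sq_add_cos_sq α₁
  have q2 := Real.sin_sq_add_cos_sq α₂
  have qR := Real.sin_sq_add_cos_sq ρ₁
  -- half-angle identity for the coefficient
  have hcoef : sin ((α₂ - α₁) / 2) / sin ((α₂ + α₁) / 2)
      = (sin α₂ * cos α₁ - cos α₂ * sin α₁) / (sin α₁ + sin α₂) := by
    have hc : 0 < cos ((α₂ - α₁) / 2) := by
      apply Real.cos_pos_of_mem_Ioo
      constructor <;> linarith [h₁.1, h₁.2, h₂.1, h₂.2]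
    have hs : 0 < sin ((α₂ + α₁) / 2) := by
      apply Real.sin_pos_of_pos_of_lt_pi <;> linarith [h₁.1, h₁.2, h₂.1, h₂.2]
    have e1 : sin α₂ * cos α₁ - cos α₂ * sin α₁
        = 2 * sin ((α₂ - α₁) / 2) * cos ((α₂ - α₁) / 2) := by
      rw [← Real.sin_sub, ← Real.sin_two_mul]; congr 1; ring
    have e2 : sin α₁ + sin α₂ = 2 * sin ((α₂ + α₁) / 2) * cos ((α₂ - α₁) / 2) := by
      have a := Real.sin_add ((α₂ + α₁) / 2) ((α₂ - α₁) / 2)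
      have b := Real.sin_sub ((α₂ + α₁) / 2) ((α₂ - α₁) / 2)
      rw [show (α₂ + α₁) / 2 + (α₂ - α₁) / 2 = α₂ by ring] at a
      rw [show (α₂ + α₁) / 2 - (α₂ - α₁) / 2 = α₁ by ring] at b
      linarith
    rw [e1, e2]; field_simp
  have hα₃c : cos α₃ = - cos α₁ := Real.cos_pi_sub _
  have hα₄c : cos α₄ = - cos α₂ := Real.cos_pi_sub _
  have hα₃s : sin α₃ = sin α₁ := Real.sin_pi_sub _
  have hα₄s : sin α₄ = sin α₂ := Real.sin_pi_sub _
  have harc : arccos (cos ρ₁) = ρ₁ := Real.arccos_cos hρ.1.le hρ.2.le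
  have htR := tan_half_aux ρ₁ sR
  set a := sin α₁
  set b := sin α₂
  set R := sin ρ₁
  set c := cos α₁
  set d := cos α₂
  set r := cos ρ₁
  have id1 : (c * b + a * d * r) ^ 2 + (a * R) ^ 2 = 1 - (c * d - a * b * r) ^ 2 := by
    grind
  have id2 : (d * a + b * c * r) ^ 2 + (b * R) ^ 2 = 1 - (c * d - a * b * r) ^ 2 := by
    grind
  have haR : 0 < a * R := mul_pos s1 sR
  have hbR : 0 < b * R := mul_pos s2 sR
  have hpos : 0 < 1 - (c * d - a * b * r) ^ 2 := by
    rw [← id1]; positivity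
  have hcξ : cos ξ = c * d - a * b * r :=
    Real.cos_arccos (by nlinarith) (by nlinarith)
  have hS2 : sin ξ ^ 2 = 1 - (c * d - a * b * r) ^ 2 := by
    rw [← hcξ]; exact Real.sin_sq ξ
  have hS : 0 < sin ξ := by
    have h0 : 0 ≤ sin ξ := Real.sin_nonneg_of_nonneg_of_le_pi (Real.arccos_nonneg _)
      (Real.arccos_le_pi _)
    rcases h0.eq_or_lt with h | h
    · rw [← h] at hS2; linarith
    · exact h
  have hu : u = -(c * b + a * d * r) / sin ξ := by
    have : d * cos ξ - c = b * -(c * b + a * d * r) := by rw [hcξ]; grind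
    show (d * cos ξ - c) / (b * sin ξ) = _
    rw [this, mul_div_mul_left _ _ s2.ne']
  have hv : v = -(d * a + b * c * r) / sin ξ := by
    have : c * cos ξ - d = a * -(d * a + b * c * r) := by rw [hcξ]; grind
    show (c * cos ξ - d) / (a * sin ξ) = _
    rw [this, mul_div_mul_left _ _ s1.ne']
  have hu2 : 1 - u ^ 2 = (a * R / sin ξ) ^ 2 := by
    rw [hu]; field_simp; linarith
  have hv2 : 1 - v ^ 2 = (b * R / sin ξ) ^ 2 := by
    rw [hv]; field_simp; linarith
  have huI : u ∈ Set.Icc (-1 : ℝ) 1 := by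
    have := sq_nonneg (a * R / sin ξ)
    exact abs_le.1 ((sq_le_one_iff_abs_le_one u).1 (by linarith))
  have hvI : v ∈ Set.Icc (-1 : ℝ) 1 := by
    have := sq_nonneg (b * R / sin ξ)
    exact abs_le.1 ((sq_le_one_iff_abs_le_one v).1 (by linarith))
  have hsu : sin (arccos u) = a * R / sin ξ := by
    rw [Real.sin_arccos, hu2, Real.sqrt_sq (by positivity)]
  have hsv : sin (arccos v) = b * R / sin ξ := by
    rw [Real.sin_arccos, hv2, Real.sqrt_sq (by positivity)]
  refine ⟨huI, hvI, ?_, ?_, ?_⟩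
  · have hab : a + b ≠ 0 := by positivity
    show tan ((arccos u - arccos v) / 2) = _
    rw [tan_half_sub_aux _ _ (by rw [hsu, hsv]; positivity), hsu, hsv,
      Real.cos_arccos huI.1 huI.2, Real.cos_arccos hvI.1 hvI.2, hcoef, htR, hu, hv]
    have h3 : a * R + b * R ≠ 0 := by positivity
    rw [← sub_div, ← add_div, div_div_div_cancel_right₀ hS.ne', div_mul_div_comm]
    rw [← add_mul]
    congr 1
    ring
  · rw [hα₃c, hα₄c, hα₃s, hα₄s, hcξ]
    have : (-c * -d - (c * d - a * b * r)) / (a * b) = r := by field_simp; ring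
    rw [this, harc]
  · show arccos v - arccos u = -(arccos u - arccos v)
    ring
end

section
/- Let α₁, α₂ ∈ (0, π) with α₁ + α₂ ≠ π, set α₃ = π − α₁ and α₄ = π − α₂, let ρ₁ ∈ (0, π), and set ξ = arccos(cos α₁ cos α₂ − sin α₁ sin α₂ cos ρ₁). Set u = (cos α₂ cos ξ − cos α₁)/(sin α₂ sin ξ) and v = (cos α₁ cos ξ − cos α₂)/(sin α₁ sin ξ), and let ρ₂ = arccos(u) + arccos(v) (the branch-2 formula of equation (3)). If ρ₂ ≠ π, then tan(ρ₂/2) = −(cos((α₂ − α₁)/2)/cos((α₂ + α₁)/2)) · tan(ρ₁/2); moreover the branch-2 formulas give ρ₃ = −arccos((cos α₃ cos α₄ − cos ξ)/(sin α₃ sin α₄)) = −ρ₁ and ρ₄ = arccos(v) + arccos(u) = ρ₂. -/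
open Real

lemma tan_half_sum_aux (A B : ℝ) (h : cos A + cos B ≠ 0) :
    tan ((A + B) / 2) = (sin A + sin B) / (cos A + cos B) := by
  have e1 : sin A + sin B = 2 * sin ((A + B) / 2) * cos ((A - B) / 2) := by
    have hA : A = (A + B) / 2 + (A - B) / 2 := by ring
    have hB : B = (A + B) / 2 - (A - B) / 2 := by ring
    have h1 := sin_add ((A + B) / 2) ((A - B) / 2)
    have h2 := sin_sub ((A + B) / 2) ((A - B) / 2)
    rw [← hA] at h1
    rw [← hB] at h2
    rw [h1, h2]; ring
  have e2 : cos A + cos B = 2 * cos ((A + B) / 2) * cos ((A - B) / 2) := by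
    have hA : A = (A + B) / 2 + (A - B) / 2 := by ring
    have hB : B = (A + B) / 2 - (A - B) / 2 := by ring
    have h1 := cos_add ((A + B) / 2) ((A - B) / 2)
    have h2 := cos_sub ((A + B) / 2) ((A - B) / 2)
    rw [← hA] at h1
    rw [← hB] at h2
    rw [h1, h2]; ring
  rw [e2] at h
  have h3 : cos ((A + B) / 2) ≠ 0 := by
    intro h0; apply h; rw [h0]; ring
  have h4 : cos ((A - B) / 2) ≠ 0 := by
    intro h0; apply h; rw [h0]; ring
  rw [e1, e2, tan_eq_sin_div_cos]
  field_simp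

/-- Cosine and sine of an arccos from a point of the circle in the upper half plane. -/
lemma arccos_aux (u t : ℝ) (ht : 0 ≤ t) (h : u ^ 2 + t ^ 2 = 1) :
    cos (arccos u) = u ∧ sin (arccos u) = t := by
  constructor
  · apply cos_arccos <;> nlinarith
  · rw [sin_arccos, show 1 - u ^ 2 = t ^ 2 by linarith, sqrt_sq ht]

theorem stmt15 (α₁ α₂ ρ₁ : ℝ)
    (h₁ : α₁ ∈ Set.Ioo 0 π) (h₂ : α₂ ∈ Set.Ioo 0 π) (h12 : α₁ + α₂ ≠ π)
    (hρ : ρ₁ ∈ Set.Ioo 0 π) :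
    let α₃ := π - α₁
    let α₄ := π - α₂
    let ξ := Real.arccos (Real.cos α₁ * Real.cos α₂ - Real.sin α₁ * Real.sin α₂ * Real.cos ρ₁)
    let u := (Real.cos α₂ * Real.cos ξ - Real.cos α₁) / (Real.sin α₂ * Real.sin ξ)
    let v := (Real.cos α₁ * Real.cos ξ - Real.cos α₂) / (Real.sin α₁ * Real.sin ξ)
    let ρ₂ := Real.arccos u + Real.arccos v
    (ρ₂ ≠ π →
      Real.tan (ρ₂ / 2) =
        -(Real.cos ((α₂ - α₁) / 2) / Real.cos ((α₂ + α₁) / 2)) * Real.tan (ρ₁ / 2)) ∧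
    -Real.arccos ((Real.cos α₃ * Real.cos α₄ - Real.cos ξ) / (Real.sin α₃ * Real.sin α₄)) = -ρ₁ ∧
    Real.arccos v + Real.arccos u = ρ₂ := by
  intro α₃ α₄ ξ u v ρ₂
  obtain ⟨h1a, h1b⟩ := h₁
  obtain ⟨h2a, h2b⟩ := h₂
  obtain ⟨hra, hrb⟩ := hρ
  have s1 : 0 < sin α₁ := sin_pos_of_pos_of_lt_pi h1a h1b
  have s2 : 0 < sin α₂ := sin_pos_of_pos_of_lt_pi h2a h2b
  have sr : 0 < sin ρ₁ := sin_pos_of_pos_of_lt_pi hra hrb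
  have p1 := sin_sq_add_cos_sq α₁
  have p2 := sin_sq_add_cos_sq α₂
  have pr := sin_sq_add_cos_sq ρ₁
  have key : 1 - (cos α₁ * cos α₂ - sin α₁ * sin α₂ * cos ρ₁) ^ 2
      = (sin α₁ * sin ρ₁) ^ 2 + (sin α₂ * cos α₁ + cos α₂ * sin α₁ * cos ρ₁) ^ 2 := by
    have q1 : cos α₁ ^ 2 = 1 - sin α₁ ^ 2 := by linarith
    have q2 : cos α₂ ^ 2 = 1 - sin α₂ ^ 2 := by linarith
    have q3 : sin ρ₁ ^ 2 = 1 - cos ρ₁ ^ 2 := by linarith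
    ring_nf
    simp only [q1, q2, q3]
    ring
  have key2 : 1 - (cos α₁ * cos α₂ - sin α₁ * sin α₂ * cos ρ₁) ^ 2
      = (sin α₂ * sin ρ₁) ^ 2 + (sin α₁ * cos α₂ + cos α₁ * sin α₂ * cos ρ₁) ^ 2 := by
    have q1 : cos α₁ ^ 2 = 1 - sin α₁ ^ 2 := by linarith
    have q2 : cos α₂ ^ 2 = 1 - sin α₂ ^ 2 := by linarith
    have q3 : sin ρ₁ ^ 2 = 1 - cos ρ₁ ^ 2 := by linarith
    ring_nf
    simp only [q1, q2, q3]
    ring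
  have hpos : 0 < (sin α₁ * sin ρ₁) ^ 2 := by positivity
  have hX2 : 0 < 1 - (cos α₁ * cos α₂ - sin α₁ * sin α₂ * cos ρ₁) ^ 2 := by
    rw [key]; positivity
  have cξ : cos ξ = cos α₁ * cos α₂ - sin α₁ * sin α₂ * cos ρ₁ := by
    apply cos_arccos <;> nlinarith
  have sξ : 0 < sin ξ := by
    change 0 < sin (arccos _)
    rw [sin_arccos]; exact sqrt_pos.mpr hX2
  have sξ2 : sin ξ ^ 2 = 1 - (cos α₁ * cos α₂ - sin α₁ * sin α₂ * cos ρ₁) ^ 2 := by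
    rw [← cξ]; linarith [sin_sq_add_cos_sq ξ]
  have hu : u = -(sin α₂ * cos α₁ + cos α₂ * sin α₁ * cos ρ₁) / sin ξ := by
    change (cos α₂ * cos ξ - cos α₁) / (sin α₂ * sin ξ) = _
    rw [cξ, div_eq_div_iff (by positivity) (by positivity)]
    linear_combination (sin ξ * cos α₁) * p2
  have hv : v = -(sin α₁ * cos α₂ + cos α₁ * sin α₂ * cos ρ₁) / sin ξ := by
    change (cos α₁ * cos ξ - cos α₂) / (sin α₁ * sin ξ) = _
    rw [cξ, div_eq_div_iff (by positivity) (by positivity)]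
    linear_combination (sin ξ * cos α₂) * p1
  obtain ⟨cA, sA⟩ := arccos_aux u (sin α₁ * sin ρ₁ / sin ξ) (by positivity) (by
    rw [hu, div_pow, div_pow, ← add_div, div_eq_one_iff_eq (by positivity), sξ2, key]; ring)
  obtain ⟨cB, sB⟩ := arccos_aux v (sin α₂ * sin ρ₁ / sin ξ) (by positivity) (by
    rw [hv, div_pow, div_pow, ← add_div, div_eq_one_iff_eq (by positivity), sξ2, key2]; ring)
  refine ⟨fun _ => ?_, ?_, add_comm _ _⟩
  · have hm : cos ((α₂ + α₁) / 2) ≠ 0 := by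
      intro h0
      apply h12
      have h3 : (α₂ + α₁) / 2 = π / 2 := by
        apply injOn_cos
        · constructor <;> linarith
        · constructor <;> linarith
        · rw [h0, cos_pi_div_two]
      linarith
    have hsm : 0 < sin ((α₂ + α₁) / 2) := sin_pos_of_pos_of_lt_pi (by linarith) (by linarith)
    have hcr : 0 < cos (ρ₁ / 2) := cos_pos_of_mem_Ioo ⟨by linarith, by linarith⟩
    have d1 : sin α₂ * cos α₁ + cos α₂ * sin α₁
        = 2 * sin ((α₂ + α₁) / 2) * cos ((α₂ + α₁) / 2) := by
      rw [← sin_add, ← sin_two_mul]; congr 1; ring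
    have d2 : sin α₁ + sin α₂ = 2 * sin ((α₂ + α₁) / 2) * cos ((α₂ - α₁) / 2) := by
      have g1 := sin_add ((α₂ + α₁) / 2) ((α₂ - α₁) / 2)
      have g2 := sin_sub ((α₂ + α₁) / 2) ((α₂ - α₁) / 2)
      rw [show (α₂ + α₁) / 2 + (α₂ - α₁) / 2 = α₂ by ring] at g1
      rw [show (α₂ + α₁) / 2 - (α₂ - α₁) / 2 = α₁ by ring] at g2
      rw [g1, g2]; ring
    have d3 : 1 + cos ρ₁ = 2 * cos (ρ₁ / 2) ^ 2 := by
      rw [cos_sq, show 2 * (ρ₁ / 2) = ρ₁ by ring]; ring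
    have d4 : sin ρ₁ = 2 * sin (ρ₁ / 2) * cos (ρ₁ / 2) := by
      rw [← sin_two_mul]; congr 1; ring
    have hsum : u + v = -((2 * sin ((α₂ + α₁) / 2) * cos ((α₂ + α₁) / 2))
        * (2 * cos (ρ₁ / 2) ^ 2)) / sin ξ := by
      rw [hu, hv, ← d1, ← d3]; ring
    have hsum2 : sin α₁ * sin ρ₁ / sin ξ + sin α₂ * sin ρ₁ / sin ξ
        = (2 * sin ((α₂ + α₁) / 2) * cos ((α₂ - α₁) / 2))
          * (2 * sin (ρ₁ / 2) * cos (ρ₁ / 2)) / sin ξ := by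
      rw [← d2, ← d4]; ring
    have hne : u + v ≠ 0 := by
      rw [hsum]
      apply div_ne_zero _ sξ.ne'
      apply neg_ne_zero.mpr
      have := hsm.ne'
      have := hcr.ne'
      positivity
    change tan ((arccos u + arccos v) / 2) = _
    rw [tan_half_sum_aux _ _ (by rw [cA, cB]; exact hne), cA, cB, sA, sB, hsum, hsum2,
      tan_eq_sin_div_cos (ρ₁ / 2)]
    have := hsm.ne'
    have := hcr.ne'
    have := sξ.ne'
    field_simp
  · congr 1
    change arccos ((cos (π - α₁) * cos (π - α₂) - cos ξ) / (sin (π - α₁) * sin (π - α₂))) = ρ₁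
    rw [cξ, cos_pi_sub, cos_pi_sub, sin_pi_sub, sin_pi_sub]
    rw [show (-cos α₁ * -cos α₂ - (cos α₁ * cos α₂ - sin α₁ * sin α₂ * cos ρ₁))
      / (sin α₁ * sin α₂) = cos ρ₁ by field_simp; ring]
    exact arccos_cos hra.le hrb.le
end

section
/- Let α₁, α₂ ∈ (0, π), set α₄ = π − α₁ and α₃ = π − α₂ (the straight-line case, where opposite creases c₁ and c₃ are collinear), let ρ₁ ∈ [0, π], and set ξ = arccos(cos α₁ cos α₂ − sin α₁ sin α₂ cos ρ₁), assumed to lie in (0, π). Then the branch-2 formulas of equation (3) reduce to: ρ₂ = 2·arccos((cos α₂ cos ξ − cos α₁)/(sin α₂ sin ξ)), ρ₃ = −arccos((cos α₃ cos α₄ − cos ξ)/(sin α₃ sin α₄)) = −ρ₁, and ρ₄ = 2·arccos((cos α₁ cos ξ − cos α₂)/(sin α₁ sin ξ)). That is, arccos((cos α₄ − cos α₃ cos ξ)/(sin α₃ sin ξ)) = arccos((cos α₂ cos ξ − cos α₁)/(sin α₂ sin ξ)), arccos((cos α₃ − cos α₄ cos ξ)/(sin α₄ sin ξ)) = arccos((cos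 α₁ cos ξ − cos α₂)/(sin α₁ sin ξ)), and arccos((cos α₃ cos α₄ − cos ξ)/(sin α₃ sin α₄)) = ρ₁. -/
open Real

theorem stmt16 (α₁ α₂ ρ₁ : ℝ)
    (h₁ : α₁ ∈ Set.Ioo 0 π) (h₂ : α₂ ∈ Set.Ioo 0 π) (hρ : ρ₁ ∈ Set.Icc 0 π) :
    let α₄ := π - α₁
    let α₃ := π - α₂
    let ξ := Real.arccos (Real.cos α₁ * Real.cos α₂ - Real.sin α₁ * Real.sin α₂ * Real.cos ρ₁)
    ξ ∈ Set.Ioo 0 π →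
    Real.arccos ((Real.cos α₄ - Real.cos α₃ * Real.cos ξ) / (Real.sin α₃ * Real.sin ξ)) =
      Real.arccos ((Real.cos α₂ * Real.cos ξ - Real.cos α₁) / (Real.sin α₂ * Real.sin ξ)) ∧
    Real.arccos ((Real.cos α₃ - Real.cos α₄ * Real.cos ξ) / (Real.sin α₄ * Real.sin ξ)) =
      Real.arccos ((Real.cos α₁ * Real.cos ξ - Real.cos α₂) / (Real.sin α₁ * Real.sin ξ)) ∧
    Real.arccos ((Real.cos α₃ * Real.cos α₄ - Real.cos ξ) / (Real.sin α₃ * Real.sin α₄)) = ρ₁ := by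
  intro α₄ α₃ ξ hξ
  have s1 : 0 < Real.sin α₁ := Real.sin_pos_of_mem_Ioo h₁
  have s2 : 0 < Real.sin α₂ := Real.sin_pos_of_mem_Ioo h₂
  have c4 : Real.cos α₄ = -Real.cos α₁ := Real.cos_pi_sub α₁
  have c3 : Real.cos α₃ = -Real.cos α₂ := Real.cos_pi_sub α₂
  have t4 : Real.sin α₄ = Real.sin α₁ := Real.sin_pi_sub α₁
  have t3 : Real.sin α₃ = Real.sin α₂ := Real.sin_pi_sub α₂
  have hc : Real.cos ξ =
      Real.cos α₁ * Real.cos α₂ - Real.sin α₁ * Real.sin α₂ * Real.cos ρ₁ := by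
    have hp : 0 < Real.sin α₁ * Real.sin α₂ := mul_pos s1 s2
    apply Real.cos_arccos
    · have h := Real.neg_one_le_cos (α₁ + α₂)
      rw [Real.cos_add] at h
      nlinarith [Real.cos_le_one ρ₁]
    · have h := Real.cos_le_one (α₁ - α₂)
      rw [Real.cos_sub] at h
      nlinarith [Real.neg_one_le_cos ρ₁]
  rw [c4, c3, t4, t3]
  refine ⟨?_, ?_, ?_⟩
  · congr 2
    ring
  · congr 2
    ring
  · have e : (-Real.cos α₂ * -Real.cos α₁ - Real.cos ξ) / (Real.sin α₂ * Real.sin α₁)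
        = Real.cos ρ₁ := by
      rw [hc, div_eq_iff (mul_pos s2 s1).ne']
      ring
    rw [e]
    exact Real.arccos_cos hρ.1 hρ.2
end
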